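/- Let b ≥ 3. The period domain D, with the subspace topology inherited from ℙ(ℂ^b), is a simply connected topological space: it is path-connected and its fundamental group is trivial. -/

import Mathlib

noncomputable section

open scoped BigOperators

def eps {b : ℕ} (i : Fin b) : ℝ := if (i : ℕ) < 3 then 1 else -1

def bR {b : ℕ} (v w : Fin b → ℝ) : ℝ := ∑ i, eps i * v i * w i

def qR {b : ℕ} (v : Fin b → ℝ) : ℝ := bR v v

def bC {b : ℕ} (z w : Fin b → ℂ) : ℂ := ∑ i, (eps i : ℂ) * z i * w i

def qC {b : ℕ} (z : Fin b → ℂ) : ℂ := bC z z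

def conjVec {b : ℕ} (z : Fin b → ℂ) : Fin b → ℂ := fun i => (starRingEnd ℂ) (z i)

def rePart {b : ℕ} (z : Fin b → ℂ) : Fin b → ℝ := fun i => (z i).re
def imPart {b : ℕ} (z : Fin b → ℂ) : Fin b → ℝ := fun i => (z i).im

def cplx {b : ℕ} (v : Fin b → ℝ) : Fin b → ℂ := fun i => (v i : ℂ)

def isPeriodVec {b : ℕ} (z : Fin b → ℂ) : Prop :=
  qC z = 0 ∧ 0 < (bC z (conjVec z)).re

instance projectivizationTopology (K V : Type*) [DivisionRing K] [AddCommGroup V] [Module K V]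
    [TopologicalSpace V] : TopologicalSpace (Projectivization K V) :=
  inferInstanceAs (TopologicalSpace (Quotient (projectivizationSetoid K V)))

def periodDomain (b : ℕ) : Set (Projectivization ℂ (Fin b → ℂ)) :=
  {x | ∃ (z : Fin b → ℂ) (hz : z ≠ 0), Projectivization.mk ℂ z hz = x ∧ isPeriodVec z}

def Pspan {b : ℕ} (z : Fin b → ℂ) : Submodule ℝ (Fin b → ℝ) :=
  Submodule.span ℝ {rePart z, imPart z}

def PosDefOn {b : ℕ} (W : Submodule ℝ (Fin b → ℝ)) : Prop :=
  ∀ v ∈ W, v ≠ 0 → 0 < qR v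

def twistorLine {b : ℕ} (W : Submodule ℝ (Fin b → ℝ)) :
    Set (Projectivization ℂ (Fin b → ℂ)) :=
  {x | ∃ (z : Fin b → ℂ) (hz : z ≠ 0), Projectivization.mk ℂ z hz = x ∧ isPeriodVec z ∧
    rePart z ∈ W ∧ imPart z ∈ W}

/-- `W^⊥ ∩ Λ = {0}`: the twistor line / three-space `W` is generic w.r.t. `Λ`. -/
def IsGenericW {b : ℕ} (Λ : AddSubgroup (Fin b → ℝ)) (W : Submodule ℝ (Fin b → ℝ)) : Prop :=
  ∀ α ∈ Λ, (∀ w ∈ W, bR α w = 0) → α = 0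

def bRlin {b : ℕ} (p : Fin b → ℝ) : (Fin b → ℝ) →ₗ[ℝ] ℝ where
  toFun v := bR v p
  map_add' x y := by
    unfold bR
    rw [← Finset.sum_add_distrib]
    exact Finset.sum_congr rfl fun i _ => by simp [Pi.add_apply]; ring
  map_smul' c x := by
    show bR (c • x) p = (RingHom.id ℝ) c • bR x p
    unfold bR
    rw [RingHom.id_apply, smul_eq_mul, Finset.mul_sum]
    exact Finset.sum_congr rfl fun i _ => by simp [Pi.smul_apply]; ring

def perpSubmodule {b : ℕ} (P : Submodule ℝ (Fin b → ℝ)) : Submodule ℝ (Fin b → ℝ) :=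
  ⨅ p ∈ P, LinearMap.ker (bRlin p)

/-!
A point `[z]` of the period domain is the same thing as an oriented plane in `ℝ^b`, spanned by
`Re z` and `Im z`, on which `q` is positive definite. Multiplying the negative coordinates of a
plane by `t ∈ [0, 1]` keeps it positive definite, so letting `t` go to `0` deforms the period domain
into the space of oriented planes in `ℝ³`. The unit normal identifies the latter with the sphere
`S²`, which is simply connected because it is covered by two punctured spheres whose intersection is
path-connected.

The scaled vector is no longer isotropic, which is why vectors `z` with `|q(z)| < ⟨z, z̄⟩` are
admitted as representatives of planes and are made isotropic by adding a multiple of `z̄`.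
-/

open Topology
open scoped unitInterval Matrix

section SimplyConnectedCover

variable {X : Type*} [TopologicalSpace X]

theorem homotopic_of_forall_mem {U : Set X} (hU : IsSimplyConnected U) {x y : X} {p q : Path x y}
    (hp : ∀ t, p t ∈ U) (hq : ∀ t, q t ∈ U) : p.Homotopic q := by
  have := hU.simplyConnectedSpace
  have hx : x ∈ U := p.source ▸ hp 0
  have hy : y ∈ U := p.target ▸ hp 1
  let codRestrict (r : Path x y) (hr : ∀ t, r t ∈ U) : Path (⟨x, hx⟩ : U) ⟨y, hy⟩ :=
    { toFun := fun t => ⟨r t, hr t⟩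
      source' := Subtype.ext r.source
      target' := Subtype.ext r.target }
  exact (SimplyConnectedSpace.paths_homotopic (codRestrict p hp) (codRestrict q hq)).map
    ⟨Subtype.val, continuous_subtype_val⟩

theorem eventually_forall_subpath_mem {x y : X} (γ : Path x y) {s : I} {W : Set X}
    (hW : W ∈ 𝓝 (γ s)) : ∀ᶠ t in 𝓝 s, ∀ r, γ.subpath s t r ∈ W := by
  have huIcc : Filter.Tendsto (Set.uIcc s) (𝓝 s) (𝓝 s).smallSets :=
    tendsto_const_nhds.uIcc Filter.tendsto_id
  filter_upwards [huIcc.eventually (Filter.eventually_smallSets_subset.2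
    (γ.continuous.continuousAt.preimage_mem_nhds hW))] with t ht r
  obtain ⟨r', hr', hγ⟩ := γ.range_subpath s t ▸ Set.mem_range_self (f := γ.subpath s t) r
  exact hγ ▸ ht hr'

theorem trans_mk_eq_of_locally {x₀ : X} (c : ∀ x, Path.Homotopic.Quotient x₀ x)
    (hc : ∀ x, ∃ W ∈ 𝓝 x, ∀ (y : X) (γ : Path x y), (∀ t, γ t ∈ W) → (c x).trans (.mk γ) = c y)
    {x y : X} (γ : Path x y) : (c x).trans (.mk γ) = c y := by
  have near (s : I) : ∀ᶠ t in 𝓝[Set.univ] s,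
      (c (γ s)).trans (.mk (γ.subpath s t)) = c (γ t) := by
    obtain ⟨W, hW, hcW⟩ := hc (γ s)
    rw [nhdsWithin_univ]
    exact (eventually_forall_subpath_mem γ hW).mono fun t ht => hcW _ _ ht
  have key : (c (γ 0)).trans (.mk (γ.subpath 0 1)) = c (γ 1) := by
    refine isPreconnected_univ.induction₂
      (fun s t : I => (c (γ s)).trans (.mk (γ.subpath s t)) = c (γ t))
      (fun s _ => near s) (fun r s t _ _ _ hrs hst => ?_) (fun s t _ _ hst => ?_)
      (Set.mem_univ 0) (Set.mem_univ 1)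
    · rw [← Path.Homotopic.Quotient.eq.2 ⟨Path.Homotopy.subpathTransSubpath γ r s t⟩,
        Path.Homotopic.Quotient.mk_trans, ← Path.Homotopic.Quotient.trans_assoc, hrs, hst]
    · rw [← hst, ← Path.symm_subpath, Path.Homotopic.Quotient.mk_symm,
        Path.Homotopic.Quotient.trans_assoc, Path.Homotopic.Quotient.symm_trans,
        Path.Homotopic.Quotient.trans_refl]
  have uncast {x' y' : X} (hx : x' = x) (hy : y' = y)
      (h : (c x').trans (.mk (γ.cast hx hy)) = c y') : (c x).trans (.mk γ) = c y := by
    subst hx hy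
    exact h
  exact uncast γ.source γ.target (γ.subpath_zero_one ▸ key)

theorem simplyConnectedSpace_of_forall_trans_mk_eq {x₀ : X}
    (c : ∀ x, Path.Homotopic.Quotient x₀ x)
    (hc : ∀ (x y : X) (γ : Path x y), (c x).trans (.mk γ) = c y) : SimplyConnectedSpace X := by
  rw [simply_connected_iff_unique_homotopic]
  refine ⟨⟨x₀⟩, fun x y => ⟨⟨⟨(c x).symm.trans (c y)⟩, fun q => ?_⟩⟩⟩
  induction q using Path.Homotopic.Quotient.ind with
  | mk γ =>
    change _ = (c x).symm.trans (c y)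
    rw [← hc x y γ, ← Path.Homotopic.Quotient.trans_assoc, Path.Homotopic.Quotient.symm_trans,
      Path.Homotopic.Quotient.refl_trans]

/-- The special case of the Seifert–van Kampen theorem in which all the pieces are simply
connected. -/
theorem simplyConnectedSpace_of_isOpen_cover {ι : Type*} {U : ι → Set X} {x₀ : X}
    (hUo : ∀ i, IsOpen (U i)) (hU : ∀ i, IsSimplyConnected (U i)) (hx₀ : ∀ i, x₀ ∈ U i)
    (hUU : Pairwise fun i j => IsPathConnected (U i ∩ U j)) (hcover : ∀ x, ∃ i, x ∈ U i) :
    SimplyConnectedSpace X := by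
  have exists_class (x : X) : ∃ q : Path.Homotopic.Quotient x₀ x,
      ∀ i (p : Path x₀ x), (∀ t, p t ∈ U i) → .mk p = q := by
    obtain ⟨i, hi⟩ := hcover x
    obtain ⟨p, hp⟩ := (hU i).isPathConnected.joinedIn x₀ (hx₀ i) x hi
    refine ⟨.mk p, fun j q hq => ?_⟩
    obtain rfl | hij := eq_or_ne i j
    · exact Path.Homotopic.Quotient.eq.2 (homotopic_of_forall_mem (hU i) hq hp)
    · obtain ⟨r, hr⟩ := (hUU hij).joinedIn x₀ ⟨hx₀ i, hx₀ j⟩ x ⟨hi, q.target ▸ hq 1⟩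
      exact Path.Homotopic.Quotient.eq.2 <|
        (homotopic_of_forall_mem (hU j) hq fun t => (hr t).2).trans
          (homotopic_of_forall_mem (hU i) (fun t => (hr t).1) hp)
  choose c hc using exists_class
  refine simplyConnectedSpace_of_forall_trans_mk_eq c fun x y γ =>
    trans_mk_eq_of_locally c (fun x => ?_) γ
  obtain ⟨i, hi⟩ := hcover x
  refine ⟨U i, (hUo i).mem_nhds hi, fun y γ hγ => ?_⟩
  obtain ⟨p, hp⟩ := (hU i).isPathConnected.joinedIn x₀ (hx₀ i) x hi
  rw [← hc x i p hp, ← Path.Homotopic.Quotient.mk_trans]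
  refine hc y i _ fun t => ?_
  have ht : p.trans γ t ∈ Set.range p ∪ Set.range γ :=
    p.trans_range γ ▸ Set.mem_range_self t
  rcases ht with ⟨s, hs⟩ | ⟨s, hs⟩
  · exact hs ▸ hp s
  · exact hs ▸ hγ s

end SimplyConnectedCover

section Sphere

variable {E : Type*} [NormedAddCommGroup E] [InnerProductSpace ℝ E]

theorem one_lt_rank_orthogonal_span_singleton (hE : 2 < Module.rank ℝ E) (v : E) :
    1 < Module.rank ℝ (ℝ ∙ v)ᗮ := by
  have hsum : Module.rank ℝ (ℝ ∙ v) + Module.rank ℝ (ℝ ∙ v)ᗮ = Module.rank ℝ E := by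
    rw [← rank_prod', ((ℝ ∙ v).prodEquivOfIsCompl _ (Submodule.isCompl_orthogonal _)).rank_eq]
  have hspan : Module.rank ℝ (ℝ ∙ v) ≤ 1 := by
    simpa using rank_span_le (R := ℝ) ({v} : Set E)
  by_contra! h
  exact hE.not_ge (hsum ▸ one_add_one_eq_two (R := Cardinal) ▸ add_le_add hspan h)

theorem isSimplyConnected_sphere_compl_singleton (v : Metric.sphere (0 : E) 1) :
    IsSimplyConnected ({v}ᶜ : Set (Metric.sphere (0 : E) 1)) :=
  ((stereographic (norm_eq_of_mem_sphere v)).toHomeomorphSourceTarget.trans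
    (Homeomorph.Set.univ _)).toHomotopyEquiv.simplyConnectedSpace

theorem isPathConnected_sphere_compl_inter_compl (hE : 2 < Module.rank ℝ E)
    {v w : Metric.sphere (0 : E) 1} (hvw : v ≠ w) :
    IsPathConnected ({v}ᶜ ∩ {w}ᶜ : Set (Metric.sphere (0 : E) 1)) := by
  let e := stereographic (norm_eq_of_mem_sphere v)
  have himage : e.symm '' {e w}ᶜ = {v}ᶜ ∩ {w}ᶜ := by
    rw [e.symm_image_eq_source_inter_preimage (Set.subset_univ _)]
    ext x
    refine and_congr_right fun hx => ?_
    exact (e.injOn.eq_iff hx hvw.symm).not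
  rw [← himage]
  exact (isPathConnected_compl_singleton_of_one_lt_rank
    (one_lt_rank_orthogonal_span_singleton hE _) _).image'
    (e.continuousOn_symm.mono fun _ _ => Set.mem_univ _)

theorem simplyConnectedSpace_sphere (hE : 2 < Module.rank ℝ E) :
    SimplyConnectedSpace (Metric.sphere (0 : E) 1) := by
  obtain ⟨v⟩ : Nonempty (Metric.sphere (0 : E) 1) :=
    (isPathConnected_sphere (Cardinal.one_lt_two.trans hE) 0 zero_le_one).nonempty.to_subtype
  have hinter : IsPathConnected ({v}ᶜ ∩ {-v}ᶜ) :=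
    isPathConnected_sphere_compl_inter_compl hE (ne_neg_of_mem_unit_sphere ℝ v)
  obtain ⟨x₀, hx₀, hx₀'⟩ := hinter.nonempty
  refine simplyConnectedSpace_of_isOpen_cover (U := fun i : Bool => {cond i v (-v)}ᶜ) (x₀ := x₀)
    (fun _ => isOpen_compl_singleton) (fun _ => isSimplyConnected_sphere_compl_singleton _)
    (Bool.forall_bool.2 ⟨hx₀', hx₀⟩) ?_ fun x => ?_
  · rintro (_ | _) (_ | _) hij
    exacts [absurd rfl hij, Set.inter_comm _ _ ▸ hinter, hinter, absurd rfl hij]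
  · obtain rfl | hx := eq_or_ne x v
    · exact ⟨false, ne_neg_of_mem_unit_sphere ℝ x⟩
    · exact ⟨true, hx⟩

end Sphere

section Projectivization

variable {K V : Type*} [DivisionRing K] [AddCommGroup V] [Module K V] [TopologicalSpace V]

theorem isOpenQuotientMap_projectivization_mk' [ContinuousConstSMul K V] :
    IsOpenQuotientMap (Projectivization.mk' K : {v : V // v ≠ 0} → Projectivization K V) := by
  have hquot : IsQuotientMap (Projectivization.mk' K : {v : V // v ≠ 0} → Projectivization K V) :=
    isQuotientMap_quotient_mk'
  refine ⟨hquot.surjective, hquot.continuous, fun O hO => ?_⟩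
  have saturation : Projectivization.mk' K ⁻¹' (Projectivization.mk' K '' O) =
      ⋃ c : Kˣ, (fun v : {v : V // v ≠ 0} =>
        (⟨c • v.1, (smul_ne_zero_iff_ne c).2 v.2⟩ : {v : V // v ≠ 0})) ⁻¹' O := by
    ext v
    simp only [Set.mem_preimage, Set.mem_image, Set.mem_iUnion, Projectivization.mk'_eq_mk,
      Projectivization.mk_eq_mk_iff]
    constructor
    · rintro ⟨w, hw, c, hc⟩
      exact ⟨c, by simpa only [hc] using hw⟩
    · rintro ⟨c, hc⟩
      exact ⟨_, hc, c, rfl⟩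
  rw [← hquot.isOpen_preimage, saturation]
  exact isOpen_iUnion fun c => hO.preimage (by fun_prop)

end Projectivization

section HermitianForm

variable {b : ℕ}

theorem bC_comm (z w : Fin b → ℂ) : bC z w = bC w z :=
  Finset.sum_congr rfl fun _ _ => by ring

theorem bC_add_left (z z' w : Fin b → ℂ) : bC (z + z') w = bC z w + bC z' w := by
  simp only [bC, Pi.add_apply, mul_add, add_mul, Finset.sum_add_distrib]

theorem bC_smul_left (c : ℂ) (z w : Fin b → ℂ) : bC (c • z) w = c * bC z w := by
  simp only [bC, Pi.smul_apply, smul_eq_mul, Finset.mul_sum]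
  exact Finset.sum_congr rfl fun _ _ => by ring

theorem bC_add_right (z w w' : Fin b → ℂ) : bC z (w + w') = bC z w + bC z w' := by
  rw [bC_comm, bC_add_left, bC_comm w, bC_comm w']

theorem bC_smul_right (c : ℂ) (z w : Fin b → ℂ) : bC z (c • w) = c * bC z w := by
  rw [bC_comm, bC_smul_left, bC_comm w]

theorem qC_smul (c : ℂ) (z : Fin b → ℂ) : qC (c • z) = c ^ 2 * qC z := by
  rw [qC, bC_smul_left, bC_smul_right, qC]
  ring

theorem conjVec_conjVec (z : Fin b → ℂ) : conjVec (conjVec z) = z :=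
  funext fun _ => Complex.conj_conj _

theorem conjVec_add (z w : Fin b → ℂ) : conjVec (z + w) = conjVec z + conjVec w :=
  funext fun _ => map_add _ _ _

theorem conjVec_smul (c : ℂ) (z : Fin b → ℂ) :
    conjVec (c • z) = starRingEnd ℂ c • conjVec z :=
  funext fun _ => map_mul _ _ _

theorem bC_conjVec_conjVec (z w : Fin b → ℂ) :
    bC (conjVec z) (conjVec w) = starRingEnd ℂ (bC z w) := by
  simp only [bC, conjVec, map_sum, map_mul, Complex.conj_ofReal]

/-- The Hermitian form `⟨z, z̄⟩`, as a real number. -/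
def hermForm (z : Fin b → ℂ) : ℝ := (bC z (conjVec z)).re

theorem bC_conjVec_self (z : Fin b → ℂ) : bC z (conjVec z) = hermForm z := by
  have hself : starRingEnd ℂ (bC z (conjVec z)) = bC z (conjVec z) := by
    rw [← bC_conjVec_conjVec, conjVec_conjVec, bC_comm]
  exact (Complex.conj_eq_iff_re.1 hself).symm

theorem hermForm_eq_sum (z : Fin b → ℂ) : hermForm z = ∑ i, eps i * ‖z i‖ ^ 2 := by
  refine Complex.ofReal_injective ?_
  simp only [← bC_conjVec_self, bC, conjVec, mul_assoc, Complex.mul_conj']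
  push_cast
  rfl

theorem hermForm_smul (c : ℂ) (z : Fin b → ℂ) : hermForm (c • z) = ‖c‖ ^ 2 * hermForm z := by
  simp only [hermForm_eq_sum, Pi.smul_apply, smul_eq_mul, norm_mul, mul_pow, Finset.mul_sum,
    mul_left_comm]

theorem isPeriodVec.smul {c : ℂ} (hc : c ≠ 0) {z : Fin b → ℂ} (hz : isPeriodVec z) :
    isPeriodVec (c • z) := by
  refine ⟨by rw [qC_smul, hz.1, mul_zero], ?_⟩
  have hpos : 0 < ‖c‖ ^ 2 * hermForm z := mul_pos (by positivity) hz.2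
  rwa [← hermForm_smul] at hpos

theorem isPeriodVec.ne_zero {z : Fin b → ℂ} (hz : isPeriodVec z) : z ≠ 0 := by
  rintro rfl
  simpa [bC] using hz.2

@[fun_prop]
theorem continuous_conjVec : Continuous (conjVec : (Fin b → ℂ) → Fin b → ℂ) := by
  unfold conjVec
  fun_prop

@[fun_prop]
theorem continuous_qC : Continuous (qC : (Fin b → ℂ) → ℂ) := by
  unfold qC bC
  fun_prop

@[fun_prop]
theorem continuous_hermForm : Continuous (hermForm : (Fin b → ℂ) → ℝ) := by
  unfold hermForm bC
  fun_prop

end HermitianForm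

section Isotropize

variable {b : ℕ}

/-- The real and imaginary parts of `z` span a real plane on which `q` is positive definite:
for `z = x + iy`, the inequality says `⟨x, y⟩² < q(x) q(y)` with `q(x) + q(y) > 0`. -/
def SpansPositivePlane (z : Fin b → ℂ) : Prop := ‖qC z‖ < hermForm z

theorem isPeriodVec.spansPositivePlane {z : Fin b → ℂ} (hz : isPeriodVec z) :
    SpansPositivePlane z := by
  rw [SpansPositivePlane, hz.1, norm_zero]
  exact hz.2

/-- The larger root `d` of `d² - 2 ⟨z, z̄⟩ d + |q(z)|² = 0`. -/
def largerRoot (z : Fin b → ℂ) : ℝ := hermForm z + √(hermForm z ^ 2 - ‖qC z‖ ^ 2)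

/-- An isotropic vector in the complex span of `z` and `z̄`. The vector `z + μ z̄` is isotropic if
`q(z) + 2 μ ⟨z, z̄⟩ + μ² conj q(z) = 0`; the solution `μ` of smaller modulus, written without
division by `q(z)`, keeps the orientation of the plane spanned by `Re z` and `Im z`. -/
def isotropize (z : Fin b → ℂ) : Fin b → ℂ := z + (-qC z / largerRoot z) • conjVec z

theorem SpansPositivePlane.hermForm_pos {z : Fin b → ℂ} (hz : SpansPositivePlane z) :
    0 < hermForm z :=
  (norm_nonneg _).trans_lt hz

theorem SpansPositivePlane.largerRoot_pos {z : Fin b → ℂ} (hz : SpansPositivePlane z) :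
    0 < largerRoot z :=
  add_pos_of_pos_of_nonneg hz.hermForm_pos (Real.sqrt_nonneg _)

theorem SpansPositivePlane.norm_qC_sq_lt {z : Fin b → ℂ} (hz : SpansPositivePlane z) :
    ‖qC z‖ ^ 2 < hermForm z ^ 2 :=
  pow_lt_pow_left₀ hz (norm_nonneg _) two_ne_zero

theorem largerRoot_sq {z : Fin b → ℂ} (hz : SpansPositivePlane z) :
    largerRoot z ^ 2 = 2 * hermForm z * largerRoot z - ‖qC z‖ ^ 2 := by
  have hsq := Real.sq_sqrt (sub_pos.2 hz.norm_qC_sq_lt).le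
  rw [largerRoot]
  linear_combination hsq

theorem largerRoot_smul (c : ℂ) (z : Fin b → ℂ) :
    largerRoot (c • z) = ‖c‖ ^ 2 * largerRoot z := by
  have hdisc : (‖c‖ ^ 2 * hermForm z) ^ 2 - (‖c‖ ^ 2 * ‖qC z‖) ^ 2 =
      (‖c‖ ^ 2) ^ 2 * (hermForm z ^ 2 - ‖qC z‖ ^ 2) := by ring
  rw [largerRoot, hermForm_smul, qC_smul, norm_mul, norm_pow, hdisc,
    Real.sqrt_mul (by positivity), Real.sqrt_sq (by positivity), largerRoot, mul_add]

theorem qC_add_smul_conjVec (μ : ℂ) (z : Fin b → ℂ) :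
    qC (z + μ • conjVec z) =
      qC z + 2 * μ * hermForm z + μ ^ 2 * starRingEnd ℂ (qC z) := by
  simp only [qC, bC_add_left, bC_add_right, bC_smul_left, bC_smul_right, bC_conjVec_self,
    bC_comm (conjVec z) z, bC_conjVec_conjVec]
  ring

theorem hermForm_add_smul_conjVec (μ : ℂ) (z : Fin b → ℂ) :
    hermForm (z + μ • conjVec z) =
      (1 + ‖μ‖ ^ 2) * hermForm z + 2 * (starRingEnd ℂ μ * qC z).re := by
  have hre : (μ * starRingEnd ℂ (qC z)).re = (starRingEnd ℂ μ * qC z).re := by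
    rw [← Complex.conj_re, map_mul, Complex.conj_conj]
  have hqC : bC z z = qC z := rfl
  have hexpand : bC (z + μ • conjVec z) (conjVec (z + μ • conjVec z)) =
      ((1 + ‖μ‖ ^ 2) * hermForm z : ℝ) + starRingEnd ℂ μ * qC z
        + μ * starRingEnd ℂ (qC z) := by
    simp only [conjVec_add, conjVec_smul, conjVec_conjVec, bC_add_left, bC_add_right,
      bC_smul_left, bC_smul_right, bC_conjVec_self, bC_comm (conjVec z) z, bC_conjVec_conjVec,
      hqC]
    push_cast
    rw [← Complex.mul_conj']
    ring
  rw [hermForm, hexpand, Complex.add_re, Complex.add_re, hre, Complex.ofReal_re]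
  ring

theorem qC_isotropize {z : Fin b → ℂ} (hz : SpansPositivePlane z) : qC (isotropize z) = 0 := by
  have hd : (largerRoot z : ℂ) ≠ 0 := Complex.ofReal_ne_zero.2 hz.largerRoot_pos.ne'
  have hroot : (largerRoot z : ℂ) ^ 2 =
      2 * hermForm z * largerRoot z - qC z * starRingEnd ℂ (qC z) := by
    rw [Complex.mul_conj']
    exact_mod_cast largerRoot_sq hz
  rw [isotropize, qC_add_smul_conjVec]
  field_simp
  linear_combination qC z * hroot

theorem hermForm_isotropize_pos {z : Fin b → ℂ} (hz : SpansPositivePlane z) :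
    0 < hermForm (isotropize z) := by
  have hd := hz.largerRoot_pos
  have hq := hz.norm_qC_sq_lt
  have hcross : (starRingEnd ℂ (-qC z / largerRoot z) * qC z).re =
      -(‖qC z‖ ^ 2 / largerRoot z) := by
    rw [map_div₀, map_neg, Complex.conj_ofReal, div_mul_eq_mul_div, neg_mul, Complex.conj_mul',
      ← Complex.ofReal_pow, ← Complex.ofReal_neg, ← Complex.ofReal_div, Complex.ofReal_re, neg_div]
  have hvalue : hermForm (isotropize z) =
      2 * (hermForm z ^ 2 - ‖qC z‖ ^ 2) / largerRoot z := by
    rw [isotropize, hermForm_add_smul_conjVec, hcross, norm_div, norm_neg, Complex.norm_real,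
      Real.norm_of_nonneg hd.le]
    field_simp
    linear_combination hermForm z * largerRoot_sq hz
  rw [hvalue]
  exact div_pos (by linarith) hd

theorem isPeriodVec_isotropize {z : Fin b → ℂ} (hz : SpansPositivePlane z) :
    isPeriodVec (isotropize z) :=
  ⟨qC_isotropize hz, hermForm_isotropize_pos hz⟩

theorem isotropize_smul {c : ℂ} (hc : c ≠ 0) (z : Fin b → ℂ) :
    isotropize (c • z) = c • isotropize z := by
  have hconj : starRingEnd ℂ c ≠ 0 := (map_ne_zero _).2 hc
  have hμ : -qC (c • z) / largerRoot (c • z) * starRingEnd ℂ c = c * (-qC z / largerRoot z) := by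
    rw [largerRoot_smul, qC_smul]
    push_cast
    rw [← Complex.mul_conj']
    field_simp
  rw [isotropize, conjVec_smul, smul_smul, hμ, isotropize, smul_add, smul_smul]

theorem isotropize_of_qC_eq_zero {z : Fin b → ℂ} (hz : qC z = 0) : isotropize z = z := by
  rw [isotropize, hz, neg_zero, zero_div, zero_smul, add_zero]

theorem continuous_isotropize :
    Continuous fun z : {z : Fin b → ℂ // SpansPositivePlane z} => isotropize z.1 := by
  have hd : Continuous (largerRoot : (Fin b → ℂ) → ℝ) := by
    unfold largerRoot
    fun_prop
  unfold isotropize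
  have hμ : Continuous fun z : {z : Fin b → ℂ // SpansPositivePlane z} =>
      -qC z.1 / (largerRoot z.1 : ℂ) :=
    Continuous.div (by fun_prop) (by fun_prop)
      fun z => Complex.ofReal_ne_zero.2 z.2.largerRoot_pos.ne'
  fun_prop

end Isotropize
section PeriodClass

theorem lift_apply_of_isQuotientMap {X Y Z : Type*} [TopologicalSpace X] [TopologicalSpace Y]
    [TopologicalSpace Z] {f : C(X, Y)} (hf : IsQuotientMap f) (g : C(X, Z))
    (h : Function.FactorsThrough g f) (x : X) : hf.lift g h (f x) = g x :=
  DFunLike.congr_fun (hf.lift_comp g h) x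

variable {b : ℕ}

/-- The point of the period domain represented by a period vector. -/
def periodClass : C({z : Fin b → ℂ // isPeriodVec z}, periodDomain b) where
  toFun z := ⟨Projectivization.mk ℂ z.1 z.2.ne_zero, z.1, z.2.ne_zero, rfl, z.2⟩
  continuous_toFun :=
    (isOpenQuotientMap_projectivization_mk'.continuous.comp
      (continuous_subtype_val.subtype_mk fun z => z.2.ne_zero)).subtype_mk _

theorem periodClass_eq_periodClass_iff {z w : {z : Fin b → ℂ // isPeriodVec z}} :
    periodClass z = periodClass w ↔ ∃ c : ℂ, c ≠ 0 ∧ c • w.1 = z.1 := by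
  refine Subtype.ext_iff.trans ((Projectivization.mk_eq_mk_iff ..).trans ?_)
  exact ⟨fun ⟨c, hc⟩ => ⟨c, c.ne_zero, hc⟩, fun ⟨c, hc, h⟩ => ⟨Units.mk0 c hc, h⟩⟩

theorem mk'_mem_periodDomain_iff {z : {z : Fin b → ℂ // z ≠ 0}} :
    Projectivization.mk' ℂ z ∈ periodDomain b ↔ isPeriodVec z.1 := by
  refine ⟨fun ⟨w, hw, heq, hper⟩ => ?_, fun hz => ⟨z.1, z.2, rfl, hz⟩⟩
  obtain ⟨c, hc⟩ := (Projectivization.mk_eq_mk_iff ℂ z.1 w z.2 hw).1 heq.symm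
  exact hc ▸ hper.smul c.ne_zero

theorem isOpenQuotientMap_periodClass : IsOpenQuotientMap (@periodClass b) := by
  let e : {z : Fin b → ℂ // isPeriodVec z} ≃ₜ
      ((Projectivization.mk' ℂ : {z : Fin b → ℂ // z ≠ 0} → _) ⁻¹' periodDomain b) :=
    { toFun := fun z => ⟨⟨z.1, z.2.ne_zero⟩, mk'_mem_periodDomain_iff.2 z.2⟩
      invFun := fun z => ⟨z.1.1, mk'_mem_periodDomain_iff.1 z.2⟩
      left_inv := fun _ => rfl
      right_inv := fun _ => rfl
      continuous_toFun := by fun_prop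
      continuous_invFun := by fun_prop }
  exact (isOpenQuotientMap_projectivization_mk'.restrictPreimage _).comp e.isOpenQuotientMap

theorem isQuotientMap_id_prodMap_periodClass (Y : Type*) [TopologicalSpace Y] :
    IsQuotientMap ((ContinuousMap.id Y).prodMap (@periodClass b)) :=
  (IsOpenQuotientMap.id.prodMap isOpenQuotientMap_periodClass).isQuotientMap

/-- The point of the period domain given by the oriented plane spanned by `Re z` and `Im z`. -/
def planeClass : C({z : Fin b → ℂ // SpansPositivePlane z}, periodDomain b) :=
  periodClass.comp ⟨fun z => ⟨isotropize z.1, isPeriodVec_isotropize z.2⟩,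
    continuous_isotropize.subtype_mk _⟩

theorem planeClass_apply (z : {z : Fin b → ℂ // SpansPositivePlane z}) :
    planeClass z = periodClass ⟨isotropize z.1, isPeriodVec_isotropize z.2⟩ :=
  rfl

theorem planeClass_eq_of_smul_eq {c : ℂ} (hc : c ≠ 0)
    {z w : {z : Fin b → ℂ // SpansPositivePlane z}} (h : c • w.1 = z.1) :
    planeClass z = planeClass w := by
  refine periodClass_eq_periodClass_iff.2 ⟨c, hc, ?_⟩
  change c • isotropize w.1 = isotropize z.1
  rw [← isotropize_smul hc, h]

theorem planeClass_eq_periodClass {z : Fin b → ℂ} (hz : isPeriodVec z) :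
    planeClass ⟨z, hz.spansPositivePlane⟩ = periodClass ⟨z, hz⟩ := by
  simp only [planeClass_apply, isotropize_of_qC_eq_zero hz.1]

end PeriodClass

section Retraction

variable {n : ℕ}

/-- The first three coordinates, on which `q` is positive definite. -/
def posCoords (z : Fin (3 + n) → ℂ) : Fin 3 → ℂ := fun i => z (Fin.castAdd n i)

/-- The coordinates after the third, on which `q` is negative definite. -/
def negCoords (z : Fin (3 + n) → ℂ) : Fin n → ℂ := fun j => z (Fin.natAdd 3 j)

/-- The linear contraction of `ℂ^(3 + n)` towards `ℂ³`, as `t` decreases from `1` to `0`. -/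
def scaleNeg (t : ℝ) (z : Fin (3 + n) → ℂ) : Fin (3 + n) → ℂ :=
  Fin.append (posCoords z) ((t : ℂ) • negCoords z)

theorem qC_append (u : Fin 3 → ℂ) (v : Fin n → ℂ) :
    qC (Fin.append u v) = ∑ i, u i ^ 2 - ∑ j, v j ^ 2 := by
  simp [qC, bC, eps, Fin.sum_univ_add, pow_two, sub_eq_add_neg]

theorem hermForm_append (u : Fin 3 → ℂ) (v : Fin n → ℂ) :
    hermForm (Fin.append u v) = ∑ i, ‖u i‖ ^ 2 - ∑ j, ‖v j‖ ^ 2 := by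
  simp [hermForm_eq_sum, eps, Fin.sum_univ_add, sub_eq_add_neg]

theorem append_posCoords_negCoords (z : Fin (3 + n) → ℂ) :
    Fin.append (posCoords z) (negCoords z) = z :=
  Fin.append_castAdd_natAdd

theorem scaleNeg_one (z : Fin (3 + n) → ℂ) : scaleNeg 1 z = z := by
  rw [scaleNeg, Complex.ofReal_one, one_smul, append_posCoords_negCoords]

theorem scaleNeg_zero (z : Fin (3 + n) → ℂ) : scaleNeg 0 z = Fin.append (posCoords z) 0 := by
  rw [scaleNeg, Complex.ofReal_zero, zero_smul]

theorem smul_append {m : ℕ} (c : ℂ) (u : Fin m → ℂ) (v : Fin n → ℂ) :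
    c • Fin.append u v = Fin.append (c • u) (c • v) := by
  ext i
  refine Fin.addCases (fun _ => ?_) (fun _ => ?_) i <;> simp

theorem conjVec_append {m : ℕ} (u : Fin m → ℂ) (v : Fin n → ℂ) :
    conjVec (Fin.append u v) = Fin.append (conjVec u) (conjVec v) := by
  ext i
  refine Fin.addCases (fun _ => ?_) (fun _ => ?_) i <;> simp [conjVec]

theorem add_append {m : ℕ} (u u' : Fin m → ℂ) (v v' : Fin n → ℂ) :
    Fin.append u v + Fin.append u' v' = Fin.append (u + u') (v + v') := by
  ext i
  refine Fin.addCases (fun _ => ?_) (fun _ => ?_) i <;> simp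

theorem scaleNeg_smul (t : ℝ) (c : ℂ) (z : Fin (3 + n) → ℂ) :
    scaleNeg t (c • z) = c • scaleNeg t z := by
  rw [scaleNeg, scaleNeg, smul_append, smul_comm c]
  rfl

theorem continuous_posCoords : Continuous (posCoords (n := n)) :=
  continuous_pi fun _ => continuous_apply _

theorem continuous_negCoords : Continuous (negCoords (n := n)) :=
  continuous_pi fun _ => continuous_apply _

theorem continuous_append_zero :
    Continuous fun u : Fin 3 → ℂ => Fin.append u (0 : Fin n → ℂ) :=
  (Fin.appendHomeomorph 3 n).continuous.comp (Continuous.prodMk continuous_id continuous_const)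

theorem continuous_scaleNeg :
    Continuous fun p : ℝ × (Fin (3 + n) → ℂ) => scaleNeg p.1 p.2 :=
  (Fin.appendHomeomorph 3 n).continuous.comp <|
    (continuous_posCoords.comp continuous_snd).prodMk <|
      (Complex.continuous_ofReal.comp continuous_fst).smul
        (continuous_negCoords.comp continuous_snd)

theorem qC_append_zero (u : Fin 3 → ℂ) : qC (Fin.append u (0 : Fin n → ℂ)) = qC u := by
  rw [qC_append]
  simp [qC, bC, eps, pow_two]

theorem hermForm_append_zero (u : Fin 3 → ℂ) :
    hermForm (Fin.append u (0 : Fin n → ℂ)) = hermForm u := by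
  rw [hermForm_append]
  simp [hermForm_eq_sum, eps]

theorem isPeriodVec.append_zero {u : Fin 3 → ℂ} (hu : isPeriodVec u) :
    isPeriodVec (Fin.append u (0 : Fin n → ℂ)) :=
  ⟨(qC_append_zero u).trans hu.1, hu.2.trans_eq (hermForm_append_zero u).symm⟩

theorem isotropize_append_zero (u : Fin 3 → ℂ) :
    isotropize (Fin.append u (0 : Fin n → ℂ)) = Fin.append (isotropize u) 0 := by
  have hconj : conjVec (0 : Fin n → ℂ) = 0 := funext fun _ => map_zero _
  rw [isotropize, largerRoot, qC_append_zero, hermForm_append_zero, conjVec_append, hconj,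
    smul_append, add_append, smul_zero, add_zero, isotropize, largerRoot]

theorem isPeriodVec.spansPositivePlane_scaleNeg {z : Fin (3 + n) → ℂ} (hz : isPeriodVec z)
    (t : I) : SpansPositivePlane (scaleNeg t z) := by
  set A := ∑ j, negCoords z j ^ 2
  set N := ∑ j, ‖negCoords z j‖ ^ 2
  have hpos : ∑ i, posCoords z i ^ 2 = A := by
    rw [← sub_eq_zero, ← qC_append, append_posCoords_negCoords, hz.1]
  have hneg : N < ∑ i, ‖posCoords z i‖ ^ 2 := by
    rw [← sub_pos, ← hermForm_append, append_posCoords_negCoords]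
    exact hz.2
  have hAN : ‖A‖ ≤ N := (norm_sum_le _ _).trans_eq (by simp only [norm_pow, N])
  have ht : 0 ≤ 1 - (t : ℝ) ^ 2 := sub_nonneg.2 (pow_le_one₀ t.2.1 t.2.2)
  have hqC : qC (scaleNeg t z) = ((1 - (t : ℝ) ^ 2 : ℝ) : ℂ) * A := by
    simp only [scaleNeg, qC_append, hpos, Pi.smul_apply, smul_eq_mul, mul_pow, ← Finset.mul_sum]
    push_cast
    ring
  have hherm : hermForm (scaleNeg t z) = ∑ i, ‖posCoords z i‖ ^ 2 - (t : ℝ) ^ 2 * N := by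
    simp only [scaleNeg, hermForm_append, Pi.smul_apply, smul_eq_mul, norm_mul, mul_pow,
      Complex.norm_real, Real.norm_eq_abs, sq_abs, ← Finset.mul_sum, N]
  calc ‖qC (scaleNeg t z)‖ = (1 - (t : ℝ) ^ 2) * ‖A‖ := by
        rw [hqC, norm_mul, Complex.norm_real, Real.norm_of_nonneg ht]
    _ ≤ (1 - (t : ℝ) ^ 2) * N := mul_le_mul_of_nonneg_left hAN ht
    _ < hermForm (scaleNeg t z) := by
        rw [hherm]
        linarith

theorem isPeriodVec.spansPositivePlane_posCoords {z : Fin (3 + n) → ℂ} (hz : isPeriodVec z) :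
    SpansPositivePlane (posCoords z) := by
  have h := hz.spansPositivePlane_scaleNeg 0
  rwa [Set.Icc.coe_zero, scaleNeg_zero, SpansPositivePlane, qC_append_zero,
    hermForm_append_zero] at h

/-- The map induced by forgetting all but the first three coordinates. -/
def periodRetraction (n : ℕ) : C(periodDomain (3 + n), periodDomain 3) :=
  isOpenQuotientMap_periodClass.isQuotientMap.lift
    (planeClass.comp ⟨fun z => ⟨posCoords z.1, z.2.spansPositivePlane_posCoords⟩,
      (continuous_posCoords.comp continuous_subtype_val).subtype_mk _⟩)
    fun z w h => by
      obtain ⟨c, hc, hzw⟩ := periodClass_eq_periodClass_iff.1 h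
      exact planeClass_eq_of_smul_eq hc (congrArg posCoords hzw)

theorem periodRetraction_periodClass (z : {z : Fin (3 + n) → ℂ // isPeriodVec z}) :
    periodRetraction n (periodClass z) =
      planeClass ⟨posCoords z.1, z.2.spansPositivePlane_posCoords⟩ :=
  lift_apply_of_isQuotientMap _ _ _ z

/-- The map induced by appending zero coordinates. -/
def periodInclusion (n : ℕ) : C(periodDomain 3, periodDomain (3 + n)) :=
  isOpenQuotientMap_periodClass.isQuotientMap.lift
    (periodClass.comp ⟨fun u => ⟨Fin.append u.1 0, u.2.append_zero⟩,
      (continuous_append_zero.comp continuous_subtype_val).subtype_mk _⟩)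
    fun u w h => by
      obtain ⟨c, hc, huw⟩ := periodClass_eq_periodClass_iff.1 h
      refine periodClass_eq_periodClass_iff.2 ⟨c, hc, ?_⟩
      change c • Fin.append w.1 0 = Fin.append u.1 0
      rw [smul_append, huw, smul_zero]

theorem periodInclusion_periodClass (u : {u : Fin 3 → ℂ // isPeriodVec u}) :
    periodInclusion n (periodClass u) = periodClass ⟨Fin.append u.1 0, u.2.append_zero⟩ :=
  lift_apply_of_isQuotientMap _ _ _ u

/-- The deformation scaling the negative coordinates of a plane by `t`. -/
def periodContraction (n : ℕ) : C(I × periodDomain (3 + n), periodDomain (3 + n)) :=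
  (isQuotientMap_id_prodMap_periodClass I).lift
    (planeClass.comp
      ⟨fun p => ⟨scaleNeg p.1 p.2.1, p.2.2.spansPositivePlane_scaleNeg p.1⟩,
        (continuous_scaleNeg.comp ((continuous_subtype_val.comp continuous_fst).prodMk
          (continuous_subtype_val.comp continuous_snd))).subtype_mk _⟩)
    fun p p' h => by
      obtain ⟨ht, hclass⟩ := Prod.ext_iff.1 h
      obtain ⟨c, hc, hzw⟩ := periodClass_eq_periodClass_iff.1 hclass
      refine planeClass_eq_of_smul_eq hc ?_
      change c • scaleNeg p'.1 p'.2.1 = scaleNeg p.1 p.2.1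
      rw [← scaleNeg_smul, hzw, show p.1 = p'.1 from ht]

theorem periodContraction_periodClass (t : I) (z : {z : Fin (3 + n) → ℂ // isPeriodVec z}) :
    periodContraction n (t, periodClass z) =
      planeClass ⟨scaleNeg t z.1, z.2.spansPositivePlane_scaleNeg t⟩ :=
  lift_apply_of_isQuotientMap (isQuotientMap_id_prodMap_periodClass I) _ _ (t, z)

theorem periodContraction_zero (x : periodDomain (3 + n)) :
    periodContraction n (0, x) = periodInclusion n (periodRetraction n x) := by
  obtain ⟨z, rfl⟩ := isOpenQuotientMap_periodClass.surjective x
  rw [periodContraction_periodClass, periodRetraction_periodClass, planeClass_apply,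
    planeClass_apply, periodInclusion_periodClass]
  simp only [Set.Icc.coe_zero, scaleNeg_zero, isotropize_append_zero]

theorem periodContraction_one (x : periodDomain (3 + n)) : periodContraction n (1, x) = x := by
  obtain ⟨z, rfl⟩ := isOpenQuotientMap_periodClass.surjective x
  rw [periodContraction_periodClass]
  simp only [Set.Icc.coe_one, scaleNeg_one, planeClass_eq_periodClass z.2]

theorem periodRetraction_comp_periodInclusion (n : ℕ) :
    (periodRetraction n).comp (periodInclusion n) = ContinuousMap.id _ := by
  ext1 x
  obtain ⟨u, rfl⟩ := isOpenQuotientMap_periodClass.surjective x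
  have hpos : posCoords (Fin.append u.1 (0 : Fin n → ℂ)) = u.1 :=
    funext fun i => Fin.append_left _ _ i
  rw [ContinuousMap.comp_apply, periodInclusion_periodClass, periodRetraction_periodClass]
  simp only [hpos, planeClass_eq_periodClass u.2, ContinuousMap.id_apply]

/-- The period domain deformation retracts onto the planes contained in `ℝ³`. -/
def periodHomotopyEquiv (n : ℕ) :
    ContinuousMap.HomotopyEquiv (periodDomain (3 + n)) (periodDomain 3) where
  toFun := periodRetraction n
  invFun := periodInclusion n
  left_inv := ⟨⟨periodContraction n, periodContraction_zero, periodContraction_one⟩⟩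
  right_inv := periodRetraction_comp_periodInclusion n ▸ .refl _

end Retraction
section UnitNormal

variable {z w : Fin 3 → ℂ}

theorem qC_eq_dotProduct (z : Fin 3 → ℂ) :
    qC z = ⟨rePart z ⬝ᵥ rePart z - imPart z ⬝ᵥ imPart z, 2 * rePart z ⬝ᵥ imPart z⟩ := by
  apply Complex.ext <;> simp [qC, bC, eps, rePart, imPart, dotProduct, Fin.sum_univ_three] <;> ring

theorem hermForm_eq_dotProduct (z : Fin 3 → ℂ) :
    hermForm z = rePart z ⬝ᵥ rePart z + imPart z ⬝ᵥ imPart z := by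
  simp [hermForm_eq_sum, eps, rePart, imPart, dotProduct, Complex.sq_norm, Complex.normSq_apply,
    Finset.sum_add_distrib]

theorem hermForm_pos_of_ne_zero (hz : z ≠ 0) : 0 < hermForm z := by
  obtain ⟨i, hi⟩ := Function.ne_iff.1 hz
  simp only [hermForm_eq_sum, eps, Fin.is_lt, if_true, one_mul]
  exact Finset.sum_pos' (fun _ _ => by positivity) ⟨i, Finset.mem_univ i, by positivity⟩

/-- For a period vector, the positively oriented unit normal of the plane spanned by `Re z` and
`Im z` in `ℝ³`. -/
def unitNormal (z : Fin 3 → ℂ) : Fin 3 → ℝ := (2 / hermForm z) • (rePart z ⨯₃ imPart z)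

theorem rePart_cross_imPart_smul (c : ℂ) (z : Fin 3 → ℂ) :
    rePart (c • z) ⨯₃ imPart (c • z) = ‖c‖ ^ 2 • (rePart z ⨯₃ imPart z) := by
  ext i
  fin_cases i <;>
    simp [cross_apply, rePart, imPart, Complex.sq_norm, Complex.normSq_apply] <;> ring

theorem unitNormal_smul {c : ℂ} (hc : c ≠ 0) (z : Fin 3 → ℂ) :
    unitNormal (c • z) = unitNormal z := by
  have hscale : 2 / (‖c‖ ^ 2 * hermForm z) * ‖c‖ ^ 2 = 2 / hermForm z := by field_simp
  rw [unitNormal, hermForm_smul, rePart_cross_imPart_smul, smul_smul, hscale, unitNormal]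

theorem unitNormal_dotProduct_self (hz : isPeriodVec z) : unitNormal z ⬝ᵥ unitNormal z = 1 := by
  have hiso := (qC_eq_dotProduct z).symm.trans hz.1
  have heq : rePart z ⬝ᵥ rePart z - imPart z ⬝ᵥ imPart z = 0 := congrArg Complex.re hiso
  have horth : 2 * rePart z ⬝ᵥ imPart z = 0 := congrArg Complex.im hiso
  have hherm : hermForm z ≠ 0 := hz.2.ne'
  have hcross : 4 * ((rePart z ⨯₃ imPart z) ⬝ᵥ (rePart z ⨯₃ imPart z)) = hermForm z ^ 2 := by
    rw [cross_dot_cross, dotProduct_comm (imPart z) (rePart z), hermForm_eq_dotProduct]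
    linear_combination (-(rePart z ⬝ᵥ rePart z - imPart z ⬝ᵥ imPart z)) * heq
      - 2 * (rePart z ⬝ᵥ imPart z) * horth
  rw [unitNormal, smul_dotProduct, dotProduct_smul, smul_eq_mul, smul_eq_mul]
  field_simp
  linear_combination hcross

theorem conjVec_cross_self (z : Fin 3 → ℂ) :
    conjVec z ⨯₃ z = (2 * Complex.I) • cplx (rePart z ⨯₃ imPart z) := by
  ext i
  fin_cases i <;> apply Complex.ext <;>
    simp [cross_apply, conjVec, cplx, rePart, imPart] <;> ring

theorem cplx_unitNormal_cross (hz : isPeriodVec z) :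
    cplx (unitNormal z) ⨯₃ z = -Complex.I • z := by
  have hherm : (hermForm z : ℂ) ≠ 0 := Complex.ofReal_ne_zero.2 hz.2.ne'
  have hbC (u v : Fin 3 → ℂ) : u ⬝ᵥ v = bC u v := by simp [bC, eps, dotProduct]
  have hnormal : cplx (unitNormal z) = (-Complex.I / hermForm z) • (conjVec z ⨯₃ z) := by
    ext i
    simp only [conjVec_cross_self, cplx, unitNormal, Pi.smul_apply, smul_eq_mul]
    push_cast
    linear_combination (2 * ((rePart z ⨯₃ imPart z) i : ℂ) / hermForm z) * Complex.I_sq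
  have hdouble : (conjVec z ⨯₃ z) ⨯₃ z = (hermForm z : ℂ) • z := by
    rw [cross_cross_eq_smul_sub_smul, hbC, hbC, bC_comm, bC_conjVec_self, ← qC, hz.1, zero_smul,
      sub_zero]
  rw [hnormal, map_smul, LinearMap.smul_apply, hdouble, smul_smul, div_mul_cancel₀ _ hherm]

/-- The operator `n ⨯₃ ·` is a derivation of the cross product, so `z ⨯₃ w` would be an
eigenvector for `-2i`, whereas its only eigenvalues are `0` and `±i`. -/
theorem cross_eq_zero_of_cross_eq_neg_I_smul {n : Fin 3 → ℂ} (hn : n ⬝ᵥ n = 1)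
    (hz : n ⨯₃ z = -Complex.I • z) (hw : n ⨯₃ w = -Complex.I • w) : z ⨯₃ w = 0 := by
  have heigen : n ⨯₃ (z ⨯₃ w) = (-2 * Complex.I) • (z ⨯₃ w) := by
    rw [leibniz_cross, hz, hw, map_smul, map_smul, LinearMap.smul_apply, ← add_smul]
    ring_nf
  have horth : n ⬝ᵥ (z ⨯₃ w) = 0 := by
    have h := dot_self_cross n (z ⨯₃ w)
    rw [heigen, dotProduct_smul, smul_eq_mul] at h
    simpa using h
  have hneg : n ⨯₃ (n ⨯₃ (z ⨯₃ w)) = -(z ⨯₃ w) := by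
    rw [cross_cross_eq_smul_sub_smul', horth, hn, zero_smul, one_smul, zero_sub]
  rw [heigen, map_smul, heigen, smul_smul] at hneg
  have hsq : (-2 * Complex.I) * (-2 * Complex.I) = -4 := by
    linear_combination 4 * Complex.I_sq
  have hthree : (3 : ℂ) • (z ⨯₃ w) = 0 := by
    rw [hsq] at hneg
    linear_combination (norm := module) -hneg
  exact (smul_eq_zero.1 hthree).resolve_left three_ne_zero

theorem exists_smul_eq_of_unitNormal_eq (hz : isPeriodVec z) (hw : isPeriodVec w)
    (h : unitNormal z = unitNormal w) : ∃ c : ℂ, c ≠ 0 ∧ c • w = z := by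
  have hn : cplx (unitNormal z) ⬝ᵥ cplx (unitNormal z) = 1 := by
    simpa [cplx, dotProduct] using congrArg Complex.ofReal (unitNormal_dotProduct_self hz)
  have hcross : w ⨯₃ z = 0 := cross_eq_zero_of_cross_eq_neg_I_smul hn
    (h ▸ cplx_unitNormal_cross hw) (cplx_unitNormal_cross hz)
  have hdep := crossProduct_ne_zero_iff_linearIndependent.not.1 (not_not.2 hcross)
  rw [LinearIndependent.pair_iff' hw.ne_zero] at hdep
  push Not at hdep
  obtain ⟨c, rfl⟩ := hdep
  exact ⟨c, left_ne_zero_of_smul hz.ne_zero, rfl⟩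

theorem exists_isPeriodVec_unitNormal_eq {n : Fin 3 → ℝ} (hn : n ⬝ᵥ n = 1) :
    ∃ z, isPeriodVec z ∧ unitNormal z = n := by
  have hn0 : n ≠ 0 := by
    rintro rfl
    simp at hn
  obtain ⟨v, hv⟩ := exists_linearIndependent_pair_of_one_lt_finrank
    (R := ℝ) (M := Fin 3 → ℝ) (by simp) hn0
  obtain ⟨x, hx, hnx⟩ : ∃ x : Fin 3 → ℝ, x ≠ 0 ∧ n ⬝ᵥ x = 0 :=
    ⟨n ⨯₃ v, crossProduct_ne_zero_iff_linearIndependent.2 hv, dot_self_cross n v⟩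
  have hxx : x ⬝ᵥ x ≠ 0 := dotProduct_self_eq_zero.not.2 hx
  have hy : (n ⨯₃ x) ⬝ᵥ (n ⨯₃ x) = x ⬝ᵥ x := by
    rw [cross_dot_cross, hn, hnx, one_mul, zero_mul, sub_zero]
  let z : Fin 3 → ℂ := fun i => ⟨x i, (n ⨯₃ x) i⟩
  have hre : rePart z = x := rfl
  have him : imPart z = n ⨯₃ x := rfl
  have hherm : hermForm z = 2 * (x ⬝ᵥ x) := by
    rw [hermForm_eq_dotProduct, hre, him, hy, two_mul]
  have hz0 : z ≠ 0 := fun h => hx (hre ▸ h ▸ rfl)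
  refine ⟨z, ⟨?_, hermForm_pos_of_ne_zero hz0⟩, ?_⟩
  · rw [qC_eq_dotProduct, hre, him, hy, dot_cross_self, sub_self, mul_zero]
    rfl
  · rw [unitNormal, hre, him, cross_cross_eq_smul_sub_smul', hnx, zero_smul, sub_zero,
      smul_smul, hherm]
    field_simp
    exact one_smul ℝ n

end UnitNormal

section PeriodDomainThree

theorem compactSpace_periodDomain_three : CompactSpace (periodDomain 3) := by
  let K : Set (Fin 3 → ℂ) := Metric.sphere 0 1 ∩ {z | qC z = 0}
  have hK : CompactSpace K := isCompact_iff_compactSpace.1 <|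
    (isCompact_sphere _ _).inter_right (isClosed_eq continuous_qC continuous_const)
  have hper (z : K) : isPeriodVec z.1 :=
    ⟨z.2.2, hermForm_pos_of_ne_zero (ne_zero_of_mem_unit_sphere ⟨z.1, z.2.1⟩)⟩
  have hcont : Continuous fun z : K => periodClass ⟨z.1, hper z⟩ :=
    periodClass.continuous.comp (continuous_subtype_val.subtype_mk _)
  refine Function.Surjective.compactSpace hcont fun x => ?_
  obtain ⟨z, rfl⟩ := isOpenQuotientMap_periodClass.surjective x
  have hnorm : ‖z.1‖ ≠ 0 := norm_ne_zero_iff.2 z.2.ne_zero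
  have hc : ((‖z.1‖⁻¹ : ℝ) : ℂ) ≠ 0 := Complex.ofReal_ne_zero.2 (inv_ne_zero hnorm)
  refine ⟨⟨((‖z.1‖⁻¹ : ℝ) : ℂ) • z.1, ?_, (z.2.smul hc).1⟩,
    periodClass_eq_periodClass_iff.2 ⟨_, hc, rfl⟩⟩
  rw [mem_sphere_zero_iff_norm, norm_smul, Complex.norm_real, norm_inv, norm_norm,
    inv_mul_cancel₀ hnorm]

theorem norm_toLp_eq_one_iff {n : Fin 3 → ℝ} :
    ‖(WithLp.toLp 2 n : EuclideanSpace ℝ (Fin 3))‖ = 1 ↔ n ⬝ᵥ n = 1 := by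
  rw [EuclideanSpace.norm_eq, Real.sqrt_eq_one]
  simp [dotProduct, pow_two]

theorem continuous_unitNormal :
    Continuous fun z : {z : Fin 3 → ℂ // isPeriodVec z} => unitNormal z.1 := by
  have hcross : Continuous fun z : Fin 3 → ℂ => rePart z ⨯₃ imPart z := by
    unfold rePart imPart
    simp only [cross_apply]
    fun_prop
  unfold unitNormal
  exact (continuous_const.div (continuous_hermForm.comp continuous_subtype_val)
    fun z => z.2.2.ne').smul (hcross.comp continuous_subtype_val)

/-- The map sending an oriented plane in `ℝ³` to its unit normal. -/
def periodNormal : C(periodDomain 3, Metric.sphere (0 : EuclideanSpace ℝ (Fin 3)) 1) :=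
  isOpenQuotientMap_periodClass.isQuotientMap.lift
    ⟨fun z => ⟨WithLp.toLp 2 (unitNormal z.1), mem_sphere_zero_iff_norm.2
        (norm_toLp_eq_one_iff.2 (unitNormal_dotProduct_self z.2))⟩,
      ((PiLp.continuous_toLp 2 _).comp continuous_unitNormal).subtype_mk _⟩
    fun z w h => by
      obtain ⟨c, hc, hzw⟩ := periodClass_eq_periodClass_iff.1 h
      refine Subtype.ext (congrArg (WithLp.toLp 2) ?_)
      rw [← hzw, unitNormal_smul hc]

theorem periodNormal_periodClass (z : {z : Fin 3 → ℂ // isPeriodVec z}) :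
    (periodNormal (periodClass z)).1 = WithLp.toLp 2 (unitNormal z.1) :=
  congrArg Subtype.val (lift_apply_of_isQuotientMap _ _ _ z)

theorem periodNormal_bijective : Function.Bijective periodNormal := by
  constructor
  · intro x y hxy
    obtain ⟨z, rfl⟩ := isOpenQuotientMap_periodClass.surjective x
    obtain ⟨w, rfl⟩ := isOpenQuotientMap_periodClass.surjective y
    have heq := congrArg Subtype.val hxy
    rw [periodNormal_periodClass, periodNormal_periodClass] at heq
    exact periodClass_eq_periodClass_iff.2 <|
      exists_smul_eq_of_unitNormal_eq z.2 w.2 (WithLp.toLp_injective 2 heq)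
  · intro n
    obtain ⟨z, hz, hzn⟩ := exists_isPeriodVec_unitNormal_eq
      (norm_toLp_eq_one_iff.1 (mem_sphere_zero_iff_norm.1 n.2))
    exact ⟨periodClass ⟨z, hz⟩, Subtype.ext <|
      (periodNormal_periodClass ⟨z, hz⟩).trans (congrArg (WithLp.toLp 2) hzn)⟩

/-- The period domain for `b = 3` is the two-sphere. -/
def periodDomainThreeHomeomorph :
    periodDomain 3 ≃ₜ Metric.sphere (0 : EuclideanSpace ℝ (Fin 3)) 1 :=
  have := compactSpace_periodDomain_three
  periodNormal.continuous.homeoOfEquivCompactToT2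
    (f := Equiv.ofBijective periodNormal periodNormal_bijective)

end PeriodDomainThree

/-- For `b ≥ 3` the period domain is path-connected with trivial
fundamental group, i.e. simply connected. -/
theorem stmt1 (b : ℕ) (hb : 3 ≤ b) :
    PathConnectedSpace ↥(periodDomain b) ∧
    ∀ x : ↥(periodDomain b), Subsingleton (FundamentalGroup ↥(periodDomain b) x) := by
  obtain ⟨n, rfl⟩ := Nat.exists_eq_add_of_le hb
  have hrank : 2 < Module.rank ℝ (EuclideanSpace ℝ (Fin 3)) := by
    rw [← Module.finrank_eq_rank, finrank_euclideanSpace_fin]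
    norm_num
  have hsphere : SimplyConnectedSpace (Metric.sphere (0 : EuclideanSpace ℝ (Fin 3)) 1) :=
    simplyConnectedSpace_sphere hrank
  have hthree : SimplyConnectedSpace (periodDomain 3) :=
    periodDomainThreeHomeomorph.toHomotopyEquiv.simplyConnectedSpace
  have hb : SimplyConnectedSpace (periodDomain (3 + n)) :=
    (periodHomotopyEquiv n).simplyConnectedSpace
  exact ⟨inferInstance, fun x => inferInstance⟩
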